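/- Let T be a smooth symmetric 2-tensor field on ℝ^3 \ {0} with components homogeneous of degree -2, and fix ξ ∈ ℝ^3 with |ξ| > 1. Define G(s) = ∫_{∂B_1(sξ)} tr_S(T) dA - 2 ∫_{B_1(sξ)} tr_{ℝ^3}(T) dV and K(s) = ∫_{B_1(sξ)} ∑_{i,j} (D_i D_j T_{ij} - D_i D_i T_{jj}) dV for s ≥ 1. Then s G'(s) = G(s) + K(s) for all s ≥ 1. -/

import Mathlib

open MeasureTheory Real

noncomputable abbrev E3 : Type := EuclideanSpace ℝ (Fin 3)

/-- The standard surface measure on the unit sphere in `ℝ³`. -/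
noncomputable def sphereMeasure : Measure (Metric.sphere (0 : E3) 1) :=
  (volume : Measure E3).toSphere

/-- The `i`-th standard basis vector of `ℝ³`. -/
noncomputable def e3 (i : Fin 3) : E3 := EuclideanSpace.single i 1

/-- Partial derivative `D_i f`. -/
noncomputable def pd (f : E3 → ℝ) (i : Fin 3) (x : E3) : ℝ := fderiv ℝ f x (e3 i)

/-- The trace `tr_{ℝ³}(T) = ∑_j T_jj`. -/
def trT (T : E3 → Fin 3 → Fin 3 → ℝ) (x : E3) : ℝ := ∑ j, T x j j

/-- The quadratic form `T(v, v) = ∑_{i,j} T_ij v_i v_j`. -/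
def quadT (T : E3 → Fin 3 → Fin 3 → ℝ) (x : E3) (v : E3) : ℝ :=
  ∑ i, ∑ j, T x i j * v i * v j

/-- `∑_{i,j} (D_i D_j T_ij - D_i D_i T_jj)`, the leading term of the scalar curvature. -/
noncomputable def scalDiv (T : E3 → Fin 3 → Fin 3 → ℝ) (x : E3) : ℝ :=
  ∑ i, ∑ j, (pd (pd (fun z => T z i j) j) i x - pd (pd (fun z => T z j j) i) i x)


instance : IsFiniteMeasure sphereMeasure := by unfold sphereMeasure; infer_instance

lemma e3_finrank : Module.finrank ℝ E3 = 3 := by simp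

lemma sphere_cont_int {f : E3 → ℝ} (hf : Continuous f) :
    Integrable (fun y : Metric.sphere (0 : E3) 1 => f y) sphereMeasure :=
  (hf.comp continuous_subtype_val).integrable_of_hasCompactSupport
    (HasCompactSupport.of_compactSpace _)

lemma ball_cont_int {f : E3 → ℝ} (hf : Continuous f) :
    Integrable f (volume.restrict (Metric.closedBall (0 : E3) 1)) :=
  hf.continuousOn.integrableOn_compact (isCompact_closedBall _ _)

lemma polar (g : E3 → ℝ) (hg : Integrable g) :
    ∫ x, g x = ∫ r in Set.Ioi (0 : ℝ), r ^ 2 *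
      ∫ y : Metric.sphere (0 : E3) 1, g (r • (y : E3)) ∂sphereMeasure := by
  have hmp := (volume : Measure E3).measurePreserving_homeomorphUnitSphereProd
  have hemb := (homeomorphUnitSphereProd E3).measurableEmbedding
  set F : Metric.sphere (0 : E3) 1 × Set.Ioi (0 : ℝ) → ℝ := fun p => g (p.2.1 • (p.1 : E3)) with hF
  have hFc : ∀ x : ({(0)}ᶜ : Set E3), F (homeomorphUnitSphereProd E3 x) = g x := by
    intro x
    have hx : (x : E3) ≠ 0 := x.2
    simp [hF, smul_smul, hx]
  have h1 : ∫ x, g x = ∫ x : ({(0)}ᶜ : Set E3), g x ∂(volume.comap (Subtype.val)) := by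
    rw [integral_subtype_comap (measurableSet_singleton _).compl g, restrict_compl_singleton]
  have h2 : ∫ x : ({(0)}ᶜ : Set E3), g x ∂(volume.comap (Subtype.val)) =
      ∫ p, F p ∂(sphereMeasure.prod (.volumeIoiPow (Module.finrank ℝ E3 - 1))) := by
    rw [sphereMeasure, ← hmp.integral_comp hemb]
    simp_rw [hFc]
  have hFi : Integrable F (sphereMeasure.prod (.volumeIoiPow (Module.finrank ℝ E3 - 1))) := by
    rw [sphereMeasure, ← hmp.integrable_comp_emb hemb]
    have : (F ∘ homeomorphUnitSphereProd E3) = g ∘ Subtype.val := funext hFc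
    rw [this, ← integrableOn_iff_comap_subtypeVal (measurableSet_singleton _).compl]
    exact hg.integrableOn
  rw [h1, h2, integral_prod_symm _ hFi, e3_finrank]
  simp only [Measure.volumeIoiPow, ENNReal.ofReal]
  rw [integral_withDensity_eq_integral_smul
    (measurable_subtype_coe.pow_const _).real_toNNReal,
    integral_subtype_comap measurableSet_Ioi fun a => Real.toNNReal (a ^ (3 - 1)) •
      ∫ y : Metric.sphere (0 : E3) 1, g (a • (y : E3)) ∂sphereMeasure]
  refine setIntegral_congr_fun measurableSet_Ioi fun x hx => ?_
  simp only [NNReal.smul_def, smul_eq_mul]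
  rw [Real.coe_toNNReal _ (pow_nonneg (le_of_lt hx) _)]

lemma pd_cont {f : E3 → ℝ} (hf : ContDiff ℝ 1 f) (j : Fin 3) : Continuous (pd f j) :=
  (hf.continuous_fderiv (by norm_num)).clm_apply continuous_const

lemma coord_cont (j : Fin 3) : Continuous (fun x : E3 => x j) := by fun_prop

lemma avg_cont {g : E3 → ℝ} (hg : Continuous g) : Continuous (fun r : ℝ =>
    ∫ y : Metric.sphere (0 : E3) 1, g (r • (y : E3)) ∂sphereMeasure) := by
  have := continuous_parametric_integral_of_continuous (μ := sphereMeasure)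
    (f := fun (r : ℝ) (y : Metric.sphere (0 : E3) 1) => g (r • (y : E3)))
    (by fun_prop) (isCompact_univ)
  simpa using this

/-- The Lipschitz cutoff identity. -/
lemma cutoff_identity {f : E3 → ℝ} (hf : ContDiff ℝ 1 f) (hc : HasCompactSupport f) (j : Fin 3)
    (R : ℝ) :
    ∫ x, (Metric.ball (0 : E3) R).indicator (fun x => ‖x‖⁻¹ * x j * f x) x =
    ∫ x, (Metric.ball (0 : E3) R).indicator (fun x => (R - ‖x‖) * pd f j x) x := by
  set u : E3 → ℝ := fun x => max (R - ‖x‖) 0 with hu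
  obtain ⟨C, hC⟩ := hf.lipschitzWith_of_hasCompactSupport hc (by norm_num)
  have huL : LipschitzWith 1 u := by
    have h1 : LipschitzWith 1 (fun x : E3 => R - ‖x‖) := by
      refine LipschitzWith.of_dist_le_mul fun x y => ?_
      rw [Real.dist_eq, dist_eq_norm]
      have := abs_norm_sub_norm_le y x
      rw [norm_sub_rev] at this
      simp only [NNReal.coe_one, one_mul]
      convert this using 2
      ring
    exact h1.max_const 0
  have huc : HasCompactSupport u := by
    refine HasCompactSupport.intro (isCompact_closedBall (0 : E3) R) fun x hx => ?_
    simp only [Metric.mem_closedBall, dist_zero_right, not_le] at hx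
    simp [hu, hx.le]
  have key := hC.integral_lineDeriv_mul_eq (μ := volume) huL huc (e3 j)
  have hL : ∫ x, lineDeriv ℝ f x (e3 j) * u x =
      ∫ x, (Metric.ball (0 : E3) R).indicator (fun x => (R - ‖x‖) * pd f j x) x := by
    congr 1
    funext x
    rw [(hf.differentiable (by norm_num) x).lineDeriv_eq_fderiv]
    by_cases hx : x ∈ Metric.ball (0 : E3) R
    · rw [Set.indicator_of_mem hx]
      simp only [Metric.mem_ball, dist_zero_right] at hx
      simp only [hu, pd]
      rw [max_eq_left (by linarith)]
      ring
    · rw [Set.indicator_of_notMem hx]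
      simp only [Metric.mem_ball, dist_zero_right, not_lt] at hx
      simp only [hu]
      rw [max_eq_right (by linarith)]
      ring
  rw [← hL, key]
  have h0 : ∀ᵐ x : E3, x ≠ 0 := by
    exact (compl_mem_ae_iff.2 (measure_singleton (μ := volume) (0 : E3)))
  have h1 : ∀ᵐ x : E3, x ∉ Metric.sphere (0 : E3) R :=
    compl_mem_ae_iff.2 (Measure.addHaar_sphere volume (0 : E3) R)
  refine integral_congr_ae ?_
  filter_upwards [h0, h1] with x hx0 hx1
  simp only [mem_sphere_iff_norm, sub_zero] at hx1
  rcases lt_or_gt_of_ne hx1 with h | h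
  · have hx : x ∈ Metric.ball (0 : E3) R := by simpa using h
    rw [Set.indicator_of_mem hx]
    have hd : HasFDerivAt (fun x : E3 => R - ‖x‖) (-(‖x‖⁻¹ • innerSL ℝ x)) x := by
      have := (hasStrictFDerivAt_norm_sq x).hasFDerivAt.sqrt (by simpa using hx0)
      simp only [Real.sqrt_sq (norm_nonneg _)] at this
      have h2 : ((1 / (2 * ‖x‖)) • 2 • (innerSL ℝ) x : E3 →L[ℝ] ℝ) = ‖x‖⁻¹ • innerSL ℝ x := by
        ext v
        simp only [smul_apply, smul_eq_mul, nsmul_eq_mul]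
        have : ‖x‖ ≠ 0 := norm_ne_zero_iff.2 hx0
        field_simp
        norm_num
      rw [h2] at this
      exact this.const_sub R
    have he : u =ᶠ[nhds x] fun x : E3 => R - ‖x‖ := by
      filter_upwards [Metric.isOpen_ball.mem_nhds hx] with z hz
      simp only [Metric.mem_ball, dist_zero_right] at hz
      simp only [hu]
      rw [max_eq_left (by linarith)]
    have hd' := hd.congr_of_eventuallyEq he
    rw [hd'.differentiableAt.lineDeriv_eq_fderiv, hd'.fderiv]
    simp [e3, EuclideanSpace.inner_single_right]
  · have hx : x ∉ Metric.ball (0 : E3) R := by simpa using h.le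
    rw [Set.indicator_of_notMem hx]
    have he : u =ᶠ[nhds x] fun x : E3 => (0 : ℝ) := by
      filter_upwards [(isOpen_lt continuous_const continuous_norm).mem_nhds h] with z hz
      have : R < ‖z‖ := hz
      simp only [hu]
      rw [max_eq_right (by linarith)]
    have hd' := (hasFDerivAt_const (𝕜 := ℝ) (0 : ℝ) x).congr_of_eventuallyEq he
    rw [hd'.differentiableAt.lineDeriv_eq_fderiv, hd'.fderiv]
    simp

lemma polar_ball (g : E3 → ℝ) (R : ℝ) (hR : 0 < R)
    (hg : IntegrableOn g (Metric.ball (0 : E3) R)) :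
    ∫ x, (Metric.ball (0 : E3) R).indicator g x = ∫ r in (0 : ℝ)..R, r ^ 2 *
      ∫ y : Metric.sphere (0 : E3) 1, g (r • (y : E3)) ∂sphereMeasure := by
  rw [polar _ (hg.integrable_indicator measurableSet_ball), intervalIntegral.integral_of_le hR.le,
    integral_Ioc_eq_integral_Ioo]
  have : Set.Ioo (0 : ℝ) R = Set.Ioi 0 ∩ Set.Iio R := rfl
  rw [this, ← setIntegral_indicator measurableSet_Iio]
  refine setIntegral_congr_fun measurableSet_Ioi fun r hr => ?_
  have hr0 : (0 : ℝ) < r := hr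
  have hn : ∀ y : Metric.sphere (0 : E3) 1, ‖r • (y : E3)‖ = r := by
    intro y
    rw [norm_smul, norm_eq_of_mem_sphere y, Real.norm_of_nonneg hr0.le, mul_one]
  by_cases h : r < R
  · rw [Set.indicator_of_mem (show r ∈ Set.Iio R from h)]
    congr 2
    funext y
    rw [Set.indicator_of_mem]
    simpa [hn] using h
  · rw [Set.indicator_of_notMem (show r ∉ Set.Iio R from h)]
    simp only [mul_eq_zero]
    right
    refine integral_eq_zero_of_ae (Filter.Eventually.of_forall fun y => ?_)
    beta_reduce
    rw [Set.indicator_of_notMem]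
    · rfl
    simpa [hn] using h

lemma gauss_cpt {f : E3 → ℝ} (hf : ContDiff ℝ 1 f) (hc : HasCompactSupport f) (j : Fin 3) :
    ∫ y : Metric.sphere (0 : E3) 1, (y : E3) j * f y ∂sphereMeasure =
    ∫ x in Metric.closedBall (0 : E3) 1, pd f j x := by
  set a : ℝ → ℝ := fun r => r ^ 2 *
    ∫ y : Metric.sphere (0 : E3) 1, (fun x : E3 => f x) (r • (y : E3)) * (y : E3) j ∂sphereMeasure
    with ha
  set b : ℝ → ℝ := fun r => r ^ 2 *
    ∫ y : Metric.sphere (0 : E3) 1, pd f j (r • (y : E3)) ∂sphereMeasure with hb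
  have hac : Continuous a := by
    have := continuous_parametric_integral_of_continuous (μ := sphereMeasure)
      (f := fun (r : ℝ) (y : Metric.sphere (0 : E3) 1) => f (r • (y : E3)) * (y : E3) j)
      (by have := hf.continuous; fun_prop) (isCompact_univ)
    simp only [Measure.restrict_univ] at this
    exact (continuous_pow 2).mul this
  have hbc : Continuous b := (continuous_pow 2).mul (avg_cont (pd_cont hf j))
  have hid : ∀ R : ℝ, 0 < R → ∫ r in (0 : ℝ)..R, a r =
      R * (∫ r in (0 : ℝ)..R, b r) - ∫ r in (0 : ℝ)..R, r * b r := by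
    intro R hR
    have h := cutoff_identity hf hc j R
    rw [polar_ball _ R hR, polar_ball _ R hR] at h
    · have e1 : ∫ r in (0 : ℝ)..R, a r = ∫ r in (0 : ℝ)..R, r ^ 2 *
          ∫ y : Metric.sphere (0 : E3) 1,
            ‖r • (y : E3)‖⁻¹ * (r • (y : E3)) j * f (r • (y : E3)) ∂sphereMeasure := by
        refine intervalIntegral.integral_congr_ae (Filter.Eventually.of_forall fun r hr => ?_)
        rw [Set.uIoc_of_le hR.le] at hr
        have hr0 : r ≠ 0 := hr.1.ne'
        simp only [ha]
        congr 2
        funext y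
        rw [norm_smul, norm_eq_of_mem_sphere y, Real.norm_of_nonneg hr.1.le]
        simp
        field_simp
      have e2 : ∫ r in (0 : ℝ)..R, r ^ 2 *
          ∫ y : Metric.sphere (0 : E3) 1,
            (R - ‖r • (y : E3)‖) * pd f j (r • (y : E3)) ∂sphereMeasure =
          ∫ r in (0 : ℝ)..R, (R * b r - r * b r) := by
        refine intervalIntegral.integral_congr_ae (Filter.Eventually.of_forall fun r hr => ?_)
        rw [Set.uIoc_of_le hR.le] at hr
        simp only [hb]
        have : ∀ y : Metric.sphere (0 : E3) 1, ‖r • (y : E3)‖ = r := by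
          intro y
          rw [norm_smul, norm_eq_of_mem_sphere y, Real.norm_of_nonneg hr.1.le, mul_one]
        simp_rw [this]
        rw [integral_const_mul]
        ring
      rw [e1, h, e2, intervalIntegral.integral_sub, intervalIntegral.integral_const_mul]
      · exact (hbc.const_mul R).intervalIntegrable _ _
      · exact (continuous_id.mul hbc).intervalIntegrable _ _
    · refine IntegrableOn.mono_set (t := Metric.closedBall 0 R) ?_ Metric.ball_subset_closedBall
      have := pd_cont hf j
      exact ContinuousOn.integrableOn_compact (isCompact_closedBall _ _) (by fun_prop)
    · obtain ⟨C, hC⟩ := hc.exists_bound_of_continuous hf.continuous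
      refine Measure.integrableOn_of_bounded (M := C) measure_ball_lt_top.ne ?_ ?_
      · have := hf.continuous.measurable
        have h2 := (coord_cont j).measurable
        exact ((measurable_norm.inv.mul h2).mul this).aestronglyMeasurable
      · refine Filter.Eventually.of_forall fun x => ?_
        rw [norm_mul, norm_mul, norm_inv, norm_norm]
        have h1 : ‖x‖⁻¹ * ‖x j‖ ≤ 1 := by
          rcases eq_or_ne x 0 with rfl | hx
          · simp
          · rw [inv_mul_le_iff₀ (norm_pos_iff.2 hx), mul_one]
            exact PiLp.norm_apply_le x j
        calc _ ≤ 1 * ‖f x‖ := by gcongr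
          _ ≤ C := by rw [one_mul]; exact hC x
  -- differentiate at R = 1
  have hd1 : HasDerivAt (fun R => ∫ r in (0 : ℝ)..R, a r) (a 1) 1 :=
    intervalIntegral.integral_hasDerivAt_right (hac.intervalIntegrable _ _)
      (hac.stronglyMeasurableAtFilter _ _) hac.continuousAt
  have hd2 : HasDerivAt (fun R => ∫ r in (0 : ℝ)..R, b r) (b 1) 1 :=
    intervalIntegral.integral_hasDerivAt_right (hbc.intervalIntegrable _ _)
      (hbc.stronglyMeasurableAtFilter _ _) hbc.continuousAt
  have hd3 : HasDerivAt (fun R => ∫ r in (0 : ℝ)..R, r * b r) (1 * b 1) 1 :=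
    intervalIntegral.integral_hasDerivAt_right ((continuous_id.mul hbc).intervalIntegrable _ _)
      ((continuous_id.mul hbc).stronglyMeasurableAtFilter _ _) (continuous_id.mul hbc).continuousAt
  have hd4 := ((hasDerivAt_id (1 : ℝ)).mul hd2).sub hd3
  have heq : (fun R => ∫ r in (0 : ℝ)..R, a r) =ᶠ[nhds 1]
      (id * (fun R => ∫ r in (0 : ℝ)..R, b r) - fun R => ∫ r in (0 : ℝ)..R, r * b r) := by
    filter_upwards [lt_mem_nhds one_pos] with R hR
    simpa using hid R hR
  have := hd1.unique (hd4.congr_of_eventuallyEq heq)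
  have hA : ∫ y : Metric.sphere (0 : E3) 1, (y : E3) j * f y ∂sphereMeasure = a 1 := by
    simp [ha, mul_comm]
  have hB : ∫ x in Metric.closedBall (0 : E3) 1, pd f j x = ∫ r in (0 : ℝ)..1, b r := by
    have hae : (Metric.closedBall (0 : E3) 1 : Set E3) =ᵐ[volume] Metric.ball 0 1 :=
      (ae_eq_of_subset_of_measure_ge Metric.ball_subset_closedBall
        (Measure.addHaar_closedBall_eq_addHaar_ball volume (0 : E3) 1).le
        measurableSet_ball.nullMeasurableSet measure_closedBall_lt_top.ne).symm
    rw [setIntegral_congr_set hae, ← integral_indicator measurableSet_ball,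
      polar_ball _ 1 one_pos]
    exact (ball_cont_int (pd_cont hf j)).mono_measure
      (Measure.restrict_mono Metric.ball_subset_closedBall le_rfl)
  rw [hA, hB, this]
  simp

lemma gauss {f : E3 → ℝ} (hf : ContDiff ℝ 1 f) (j : Fin 3) :
    ∫ y : Metric.sphere (0 : E3) 1, (y : E3) j * f y ∂sphereMeasure =
    ∫ x in Metric.closedBall (0 : E3) 1, pd f j x := by
  let χ : ContDiffBump (0 : E3) := ⟨2, 3, by norm_num, by norm_num⟩
  have h := gauss_cpt (f := fun x => χ x * f x) (χ.contDiff.mul hf)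
    (χ.hasCompactSupport.mul_right) j
  have h1 : ∀ x ∈ Metric.ball (0 : E3) 2, χ x = 1 := fun x hx =>
    χ.one_of_mem_closedBall (Metric.ball_subset_closedBall hx)
  have e1 : ∀ y : Metric.sphere (0 : E3) 1, χ y * f y = f y := by
    intro y
    rw [h1 y (by simp [norm_eq_of_mem_sphere y]), one_mul]
  simp_rw [e1] at h
  rw [h]
  refine setIntegral_congr_fun measurableSet_closedBall fun x hx => ?_
  have hx2 : x ∈ Metric.ball (0 : E3) 2 := by
    simp only [Metric.mem_closedBall, Metric.mem_ball] at *
    linarith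
  have : (fun x => χ x * f x) =ᶠ[nhds x] f := by
    filter_upwards [Metric.isOpen_ball.mem_nhds hx2] with z hz
    rw [h1 z hz, one_mul]
  simp only [pd]
  rw [this.fderiv_eq]

/-! ### Calculus of `pd` -/

lemma pd_mul {f g : E3 → ℝ} (hf : Differentiable ℝ f) (hg : Differentiable ℝ g) (j : Fin 3)
    (x : E3) : pd (fun y => f y * g y) j x = f x * pd g j x + pd f j x * g x := by
  simp only [pd]
  rw [fderiv_fun_mul (hf x) (hg x)]
  simp
  ring

lemma pd_add {f g : E3 → ℝ} (hf : Differentiable ℝ f) (hg : Differentiable ℝ g) (j : Fin 3)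
    (x : E3) : pd (fun y => f y + g y) j x = pd f j x + pd g j x := by
  simp only [pd]
  rw [fderiv_fun_add (hf x) (hg x)]
  simp

lemma pd_sub {f g : E3 → ℝ} (hf : Differentiable ℝ f) (hg : Differentiable ℝ g) (j : Fin 3)
    (x : E3) : pd (fun y => f y - g y) j x = pd f j x - pd g j x := by
  simp only [pd]
  rw [fderiv_fun_sub (hf x) (hg x)]
  simp

lemma pd_const_mul {f : E3 → ℝ} (hf : Differentiable ℝ f) (c : ℝ) (j : Fin 3)
    (x : E3) : pd (fun y => c * f y) j x = c * pd f j x := by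
  simp only [pd]
  rw [fderiv_const_mul (hf x)]
  simp

lemma pd_sum {f : Fin 3 → E3 → ℝ} (hf : ∀ i, Differentiable ℝ (f i)) (j : Fin 3)
    (x : E3) : pd (fun y => ∑ i, f i y) j x = ∑ i, pd (f i) j x := by
  simp only [pd]
  rw [fderiv_fun_sum (fun i _ => hf i x)]
  simp

lemma pd_coord (m j : Fin 3) (x : E3) : pd (fun y => y m) j x = if m = j then 1 else 0 := by
  simp only [pd]
  have : HasFDerivAt (fun y : E3 => y m) (EuclideanSpace.proj m : E3 →L[ℝ] ℝ) x :=
    (EuclideanSpace.proj m : E3 →L[ℝ] ℝ).hasFDerivAt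
  rw [this.fderiv]
  simp [e3]

lemma coord_smooth (m : Fin 3) : ContDiff ℝ (⊤ : ℕ∞) (fun y : E3 => y m) :=
  (EuclideanSpace.proj m : E3 →L[ℝ] ℝ).contDiff

lemma pd_smooth {f : E3 → ℝ} (hf : ContDiff ℝ (⊤ : ℕ∞) f) (j : Fin 3) :
    ContDiff ℝ (⊤ : ℕ∞) (pd f j) :=
  (hf.fderiv_right (by simp)).clm_apply contDiff_const

lemma pd_symm {f : E3 → ℝ} (hf : ContDiff ℝ (⊤ : ℕ∞) f) (i j : Fin 3) (x : E3) :
    pd (pd f i) j x = pd (pd f j) i x := by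
  have hd : DifferentiableAt ℝ (fderiv ℝ f) x :=
    ((hf.fderiv_right (m := (⊤ : ℕ∞)) (by simp)).differentiable (by simp)) x
  have h : ∀ a b : Fin 3, pd (pd f a) b x = fderiv ℝ (fderiv ℝ f) x (e3 b) (e3 a) := by
    intro a b
    have : HasFDerivAt (fun y => fderiv ℝ f y (e3 a)) _ x :=
      hd.hasFDerivAt.clm_apply (hasFDerivAt_const (e3 a) x)
    change fderiv ℝ (fun y => fderiv ℝ f y (e3 a)) x (e3 b) = _
    rw [this.fderiv]
    simp
  rw [h, h]
  exact (hf.contDiffAt.isSymmSndFDerivAt (by simp; exact WithTop.coe_le_coe.2 le_top)) _ _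

lemma fderiv_eq_sum (f : E3 → ℝ) (x v : E3) : fderiv ℝ f x v = ∑ k, v k * pd f k x := by
  have hv : v = ∑ k, v k • e3 k := by
    ext i
    simp [e3, Fin.sum_univ_three]
    fin_cases i <;> simp
  conv_lhs => rw [hv]
  simp [pd]

lemma div_thm (W : Fin 3 → E3 → ℝ) (hW : ∀ i, ContDiff ℝ (⊤ : ℕ∞) (W i)) :
    ∫ y : Metric.sphere (0 : E3) 1, ∑ i, (y : E3) i * W i y ∂sphereMeasure =
    ∫ x in Metric.closedBall (0 : E3) 1, ∑ i, pd (W i) i x := by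
  have hW1 : ∀ i, ContDiff ℝ 1 (W i) := fun i => (hW i).of_le (by simp)
  rw [integral_finsetSum, integral_finsetSum]
  · exact Finset.sum_congr rfl fun i _ => gauss (hW1 i) i
  · exact fun i _ => ball_cont_int (pd_cont (hW1 i) i)
  · exact fun i _ => sphere_cont_int (f := fun y => y i * W i y)
      ((coord_cont i).mul (hW i).continuous)

/-- `-2 U_ij - y·∇U_ij`. -/
noncomputable def PP (U : E3 → Fin 3 → Fin 3 → ℝ) (y : E3) (i j : Fin 3) : ℝ :=
  -2 * U y i j - ∑ k, y k * pd (fun z => U z i j) k y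

/-- auxiliary functions `y_m ∑_l y_l U_lj`. -/
noncomputable def ff (U : E3 → Fin 3 → Fin 3 → ℝ) (m j : Fin 3) (y : E3) : ℝ :=
  y m * ∑ l, y l * U y l j

noncomputable def WW (U : E3 → Fin 3 → Fin 3 → ℝ) (m : Fin 3) (y : E3) : ℝ :=
  -2 * (y m * ∑ j, U y j j) +
    (∑ j, ((pd (fun z => U z m j) j y - pd (fun z => U z j j) m y)
      - (pd (ff U m j) j y - pd (ff U j m) j y)))

lemma key_identity (U : E3 → Fin 3 → Fin 3 → ℝ)
    (hU : ∀ i j, ContDiff ℝ (⊤ : ℕ∞) (fun z => U z i j)) :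
    ∫ y : Metric.sphere (0 : E3) 1, ((∑ j, PP U y j j - ∑ i, ∑ j, PP U y i j * (y : E3) i * (y : E3) j)
      - (∑ j, U y j j - ∑ i, ∑ j, U y i j * (y : E3) i * (y : E3) j)) ∂sphereMeasure =
    ∫ x in Metric.closedBall (0 : E3) 1, (2 * ∑ j, PP U x j j - 2 * ∑ j, U x j j + scalDiv U x) := by
  have hd : ∀ {f : E3 → ℝ}, ContDiff ℝ (⊤ : ℕ∞) f → Differentiable ℝ f :=
    fun hf => hf.differentiable (by simp)
  have hff : ∀ m j, ContDiff ℝ (⊤ : ℕ∞) (ff U m j) := by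
    intro m j
    exact (coord_smooth m).mul (ContDiff.sum fun l _ => (coord_smooth l).mul (hU l j))
  have ht : ContDiff ℝ (⊤ : ℕ∞) (fun y => ∑ j, U y j j) := ContDiff.sum fun l _ => hU l l
  have hA : ∀ m j, ContDiff ℝ (⊤ : ℕ∞)
      (fun y => pd (fun z => U z m j) j y - pd (fun z => U z j j) m y) := fun m j =>
    (pd_smooth (hU m j) j).sub (pd_smooth (hU j j) m)
  have hB : ∀ m j, ContDiff ℝ (⊤ : ℕ∞)
      (fun y => pd (ff U m j) j y - pd (ff U j m) j y) := fun m j =>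
    (pd_smooth (hff m j) j).sub (pd_smooth (hff j m) j)
  have hC : ∀ m, ContDiff ℝ (⊤ : ℕ∞) (fun y : E3 => -2 * (y m * ∑ j, U y j j)) := fun m =>
    contDiff_const.mul ((coord_smooth m).mul ht)
  have hD : ∀ m, ContDiff ℝ (⊤ : ℕ∞) (fun y : E3 =>
      (∑ j, ((pd (fun z => U z m j) j y - pd (fun z => U z j j) m y)
      - (pd (ff U m j) j y - pd (ff U j m) j y)))) := fun m =>
    ContDiff.sum fun j _ => (hA m j).sub (hB m j)
  have hW : ∀ m, ContDiff ℝ (⊤ : ℕ∞) (WW U m) := fun m => (hC m).add (hD m)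
  have hpff : ∀ m j k y, pd (ff U m j) k y = y m * (∑ l, (y l * pd (fun z => U z l j) k y
      + (if l = k then 1 else 0) * U y l j)) + (if m = k then 1 else 0) * ∑ l, y l * U y l j := by
    intro m j k y
    have e : ff U m j = fun y => y m * ∑ l, y l * U y l j := rfl
    rw [e, pd_mul (hd (coord_smooth m))
      (hd (ContDiff.sum fun l _ => (coord_smooth l).mul (hU l j))),
      pd_sum (fun l => hd ((coord_smooth l).mul (hU l j))), pd_coord]
    congr 2
    refine Finset.sum_congr rfl fun l _ => ?_
    rw [pd_mul (hd (coord_smooth l)) (hd (hU l j)), pd_coord]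
  convert div_thm (WW U) hW using 1
  · refine integral_congr_ae (Filter.Eventually.of_forall fun y => ?_)
    have hy : (y : E3) 0 ^ 2 + (y : E3) 1 ^ 2 + (y : E3) 2 ^ 2 = 1 := by
      have := EuclideanSpace.norm_sq_eq (y : E3)
      rw [norm_eq_of_mem_sphere y] at this
      simp [Fin.sum_univ_three] at this
      linarith
    simp only [WW, PP, hpff]
    simp only [Fin.sum_univ_three]
    simp
    linear_combination (3 * (U y 0 0 + U y 1 1 + U y 2 2) +
      (y : E3) 0 * pd (fun z => U z 0 0) 0 y + (y : E3) 0 * pd (fun z => U z 0 1) 1 y + (y : E3) 0 * pd (fun z => U z 0 2) 2 y +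
      (y : E3) 1 * pd (fun z => U z 1 0) 0 y + (y : E3) 1 * pd (fun z => U z 1 1) 1 y + (y : E3) 1 * pd (fun z => U z 1 2) 2 y +
      (y : E3) 2 * pd (fun z => U z 2 0) 0 y + (y : E3) 2 * pd (fun z => U z 2 1) 1 y + (y : E3) 2 * pd (fun z => U z 2 2) 2 y) * hy
  · refine integral_congr_ae (Filter.Eventually.of_forall fun y => ?_)
    have e1 : ∀ m, pd (WW U m) m y = -2 * (y m * (∑ j, pd (fun z => U z j j) m y) + ∑ j, U y j j)
        + ∑ j, ((pd (pd (fun z => U z m j) j) m y - pd (pd (fun z => U z j j) m) m y)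
          - (pd (pd (ff U m j) j) m y - pd (pd (ff U j m) j) m y)) := by
      intro m
      have e : WW U m = fun y => -2 * (y m * ∑ j, U y j j) +
        (∑ j, ((pd (fun z => U z m j) j y - pd (fun z => U z j j) m y)
          - (pd (ff U m j) j y - pd (ff U j m) j y))) := rfl
      rw [e, pd_add (hd (hC m)) (hd (hD m)), pd_const_mul (hd ((coord_smooth m).mul ht)),
        pd_mul (hd (coord_smooth m)) (hd ht), pd_sum (fun j => hd (hU j j)), pd_coord,
        pd_sum (fun j => hd ((hA m j).sub (hB m j)))]
      congr 1
      · simp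
      · refine Finset.sum_congr rfl fun j _ => ?_
        rw [pd_sub (hd (hA m j)) (hd (hB m j)),
          pd_sub (hd (pd_smooth (hU m j) j)) (hd (pd_smooth (hU j j) m)),
          pd_sub (hd (pd_smooth (hff m j) j)) (hd (pd_smooth (hff j m) j))]
    have hs : ∀ m j, pd (pd (ff U j m) j) m y = pd (pd (ff U j m) m) j y := fun m j =>
      pd_symm (hff j m) j m y
    beta_reduce
    simp only [e1, scalDiv, PP, Fin.sum_univ_three]
    rw [hs 0 1, hs 0 2, hs 1 2, hs 1 0, hs 2 0, hs 2 1, hs 0 0, hs 1 1, hs 2 2]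
    ring

/-! ### Differentiation under the integral sign -/

lemma deriv_int {α : Type*} [MeasurableSpace α] (μ : Measure α) [IsFiniteMeasure μ]
    (p : α → E3) (hp : Measurable p) (hp1 : ∀ᵐ a ∂μ, ‖p a‖ ≤ 1)
    (Φ Φ' : ℝ × E3 → ℝ) (hΦ : Continuous Φ) (hΦ' : Continuous Φ')
    (hd : ∀ s y, HasDerivAt (fun s => Φ (s, y)) (Φ' (s, y)) s) (s₀ : ℝ) :
    HasDerivAt (fun s => ∫ a, Φ (s, p a) ∂μ) (∫ a, Φ' (s₀, p a) ∂μ) s₀ := by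
  have hK : IsCompact (Metric.closedBall s₀ 1 ×ˢ Metric.closedBall (0 : E3) 1) :=
    (isCompact_closedBall _ _).prod (isCompact_closedBall _ _)
  obtain ⟨C, hC⟩ := hK.exists_bound_of_continuousOn hΦ'.continuousOn
  obtain ⟨D, hD⟩ := hK.exists_bound_of_continuousOn hΦ.continuousOn
  have hm : ∀ s : ℝ, Measurable (fun a => (s, p a)) := fun s => measurable_const.prodMk hp
  refine (hasDerivAt_integral_of_dominated_loc_of_deriv_le (F := fun s a => Φ (s, p a))
    (F' := fun s a => Φ' (s, p a)) (bound := fun _ => C)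
    (Metric.closedBall_mem_nhds s₀ one_pos) ?_ ?_ ?_ ?_ (integrable_const _) ?_).2
  · exact Filter.Eventually.of_forall fun s =>
      (hΦ.measurable.comp (hm s)).aestronglyMeasurable
  · refine Integrable.of_bound (hΦ.measurable.comp (hm s₀)).aestronglyMeasurable D ?_
    filter_upwards [hp1] with a ha
    exact hD _ ⟨by simp, by simpa using ha⟩
  · exact (hΦ'.measurable.comp (hm s₀)).aestronglyMeasurable
  · filter_upwards [hp1] with a ha s hs
    exact hC _ ⟨hs, by simpa using ha⟩
  · exact Filter.Eventually.of_forall fun a s _ => hd s (p a)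

lemma exists_ext (T : E3 → Fin 3 → Fin 3 → ℝ)
    (hsmooth : ContDiffOn ℝ (⊤ : ℕ∞) (fun x => T x) {(0 : E3)}ᶜ) (ε : ℝ) (hε : 0 < ε) :
    ∃ V : E3 → Fin 3 → Fin 3 → ℝ, (∀ i j, ContDiff ℝ (⊤ : ℕ∞) (fun z => V z i j)) ∧
      ∀ x, ε ≤ ‖x‖ → V x = T x := by
  let χ : ContDiffBump (0 : E3) := ⟨ε / 2, ε, by positivity, by linarith⟩
  refine ⟨fun x i j => (1 - χ x) * T x i j, fun i j => ?_, fun x hx => ?_⟩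
  · rw [contDiff_iff_contDiffAt]
    intro x
    by_cases hx : x = 0
    · subst hx
      refine (contDiffAt_const (c := (0 : ℝ))).congr_of_eventuallyEq ?_
      filter_upwards [χ.eventuallyEq_one] with z hz
      simp only [hz]
      simp
    · have h1 : ContDiffAt ℝ (⊤ : ℕ∞) (fun x => T x) x :=
        hsmooth.contDiffAt (isOpen_compl_singleton.mem_nhds hx)
      have h2 : ContDiffAt ℝ (⊤ : ℕ∞) (fun x => T x i j) x :=
        contDiffAt_pi.1 (contDiffAt_pi.1 h1 i) j
      exact (contDiffAt_const.sub χ.contDiff.contDiffAt).mul h2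
  · have : χ x = 0 := χ.zero_of_le_dist (by simpa using hx)
    funext i j
    simp [this]

lemma euler (T V : E3 → Fin 3 → Fin 3 → ℝ) (ε : ℝ) (hε : 0 < ε)
    (hV : ∀ i j, ContDiff ℝ (⊤ : ℕ∞) (fun z => V z i j))
    (hVT : ∀ x, ε ≤ ‖x‖ → V x = T x)
    (hhom : ∀ c : ℝ, 0 < c → ∀ x : E3, x ≠ 0 → ∀ i j, T (c • x) i j = (c ^ 2)⁻¹ * T x i j)
    (x : E3) (hx : ε < ‖x‖) (i j : Fin 3) :
    fderiv ℝ (fun z => V z i j) x x = -2 * V x i j := by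
  have hx0 : x ≠ 0 := norm_pos_iff.1 (hε.trans hx)
  have h1 : HasDerivAt (fun c : ℝ => V (c • x) i j) (fderiv ℝ (fun z => V z i j) x x) 1 := by
    have hf : HasFDerivAt (fun z => V z i j) (fderiv ℝ (fun z => V z i j) x) ((1 : ℝ) • x) := by
      rw [one_smul]
      exact ((hV i j).differentiable (by simp) x).hasFDerivAt
    have hc : HasDerivAt (fun c : ℝ => c • x) x 1 := by
      simpa using (hasDerivAt_id (1 : ℝ)).smul_const x
    exact hf.comp_hasDerivAt (1 : ℝ) hc
  have h2 : HasDerivAt (fun c : ℝ => (c ^ 2)⁻¹ * V x i j) (-2 * V x i j) 1 := by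
    have := ((hasDerivAt_pow 2 (1 : ℝ)).inv (by norm_num)).mul_const (V x i j)
    have h3 : (-(((2 : ℕ) : ℝ) * 1 ^ (2 - 1)) / (1 ^ 2) ^ 2 * V x i j) = -2 * V x i j := by norm_num
    rw [h3] at this
    exact this
  have he : (fun c : ℝ => V (c • x) i j) =ᶠ[nhds 1] fun c => (c ^ 2)⁻¹ * V x i j := by
    have hcont : Continuous fun c : ℝ => ‖c • x‖ := by fun_prop
    have : ∀ᶠ c : ℝ in nhds 1, ε < ‖c • x‖ :=
      hcont.continuousAt.eventually (lt_mem_nhds (by simpa using hx))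
    filter_upwards [this, lt_mem_nhds one_pos] with c hc hc0
    rw [hVT _ hc.le, hVT _ hx.le, hhom c hc0 x hx0]
  exact h1.unique (h2.congr_of_eventuallyEq he)

lemma pd_shift (f : E3 → ℝ) (c : E3) (k : Fin 3) :
    pd (fun y => f (c + y)) k = fun y => pd f k (c + y) := by
  funext y
  simp only [pd]
  rw [fderiv_comp_add_left]

lemma scalDiv_shift (V : E3 → Fin 3 → Fin 3 → ℝ) (c y : E3) :
    scalDiv (fun y => V (c + y)) y = scalDiv V (c + y) := by
  have h := fun i j => pd_shift (fun z => V z i j) c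
  simp only [scalDiv]
  refine Finset.sum_congr rfl fun i _ => Finset.sum_congr rfl fun j _ => ?_
  rw [pd_shift (fun z => V z i j), pd_shift (pd (fun z => V z i j) j),
    pd_shift (fun z => V z j j), pd_shift (pd (fun z => V z j j) i)]

lemma ball_shift (g : E3 → ℝ) (c : E3) :
    ∫ x in Metric.closedBall c 1, g x = ∫ y in Metric.closedBall (0 : E3) 1, g (c + y) := by
  have h := (measurePreserving_add_left (volume : Measure E3) c).setIntegral_preimage_emb
    (measurableEmbedding_addLeft c) g (Metric.closedBall c 1)
  rw [← h]
  congr 2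
  ext y
  simp

lemma pd_congr {f g : E3 → ℝ} {x : E3} (h : f =ᶠ[nhds x] g) (k : Fin 3) :
    pd f k =ᶠ[nhds x] pd g k := by
  filter_upwards [h.fderiv (𝕜 := ℝ)] with z hz
  simp only [pd, hz]

lemma scalDiv_congr (T V : E3 → Fin 3 → Fin 3 → ℝ) (x : E3) (h : V =ᶠ[nhds x] T) :
    scalDiv V x = scalDiv T x := by
  have hij : ∀ i j, (fun z => V z i j) =ᶠ[nhds x] (fun z => T z i j) := fun i j => by
    filter_upwards [h] with z hz
    rw [hz]
  simp only [scalDiv]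
  refine Finset.sum_congr rfl fun i _ => Finset.sum_congr rfl fun j _ => ?_
  rw [(pd_congr (pd_congr (hij i j) j) i).eq_of_nhds, (pd_congr (pd_congr (hij j j) i) i).eq_of_nhds]

theorem ode_for_G (T : E3 → Fin 3 → Fin 3 → ℝ)
    (hsmooth : ContDiffOn ℝ (⊤ : ℕ∞) (fun x => T x) {(0 : E3)}ᶜ)
    (hsym : ∀ x i j, T x i j = T x j i)
    (hhom : ∀ c : ℝ, 0 < c → ∀ x : E3, x ≠ 0 → ∀ i j, T (c • x) i j = (c ^ 2)⁻¹ * T x i j)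
    (ξ : E3) (hξ : 1 < ‖ξ‖) (G K : ℝ → ℝ)
    (hG : ∀ s : ℝ, G s =
      (∫ y : Metric.sphere (0 : E3) 1,
          (trT T (s • ξ + (y : E3)) - quadT T (s • ξ + (y : E3)) (y : E3)) ∂sphereMeasure)
        - 2 * ∫ x in Metric.closedBall (s • ξ) 1, trT T x)
    (hK : ∀ s : ℝ, K s = ∫ x in Metric.closedBall (s • ξ) 1, scalDiv T x) :
    ∀ s : ℝ, 1 ≤ s → HasDerivAt G ((G s + K s) / s) s := by
  intro s₀ hs₀
  have hs0 : 0 < s₀ := by linarith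
  set ε : ℝ := (s₀ * ‖ξ‖ - 1) / 2 with hεdef
  have hε : 0 < ε := by
    have : 1 < s₀ * ‖ξ‖ := by nlinarith
    simp only [hεdef]
    linarith
  obtain ⟨V, hV, hVT⟩ := exists_ext T hsmooth ε hε
  -- points near the ball stay away from the origin
  have hfar : ∀ s : ℝ, 0 < s → ε < s * ‖ξ‖ - 1 → ∀ y : E3, ‖y‖ ≤ 1 → ε < ‖s • ξ + y‖ := by
    intro s hs h y hy
    have h1 : ‖s • ξ‖ = s * ‖ξ‖ := by rw [norm_smul, Real.norm_of_nonneg hs.le]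
    have h2 := norm_sub_le (s • ξ + y) y
    rw [add_sub_cancel_right, h1] at h2
    linarith
  have hnear : ∀ᶠ s : ℝ in nhds s₀, 0 < s ∧ ε < s * ‖ξ‖ - 1 := by
    have hcont : Continuous fun s : ℝ => s * ‖ξ‖ - 1 := by fun_prop
    refine (lt_mem_nhds hs0).and (hcont.continuousAt.eventually (lt_mem_nhds ?_))
    simp only [hεdef] at hε ⊢
    linarith
  have hs₀n := hnear.self_of_nhds
  have hGV : ∀ s : ℝ, 0 < s ∧ ε < s * ‖ξ‖ - 1 → G s =
      (∫ y : Metric.sphere (0 : E3) 1,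
          (∑ j, V (s • ξ + y) j j - ∑ i, ∑ j, V (s • ξ + y) i j * (y : E3) i * (y : E3) j)
            ∂sphereMeasure)
        - 2 * ∫ y in Metric.closedBall (0 : E3) 1, ∑ j, V (s • ξ + y) j j := by
    intro s hs
    rw [hG s, ball_shift]
    congr 2
    · funext y
      rw [hVT _ (hfar s hs.1 hs.2 y (norm_eq_of_mem_sphere y).le).le]
      rfl
    · refine setIntegral_congr_fun measurableSet_closedBall fun y hy => ?_
      beta_reduce
      rw [hVT _ (hfar s hs.1 hs.2 y (by simpa using hy)).le]
      rfl
  set U : E3 → Fin 3 → Fin 3 → ℝ := fun y => V (s₀ • ξ + y) with hUdef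
  have hU : ∀ i j, ContDiff ℝ (⊤ : ℕ∞) (fun z => U z i j) := fun i j =>
    (hV i j).comp (contDiff_const.add contDiff_id)
  have hKV : K s₀ = ∫ y in Metric.closedBall (0 : E3) 1, scalDiv U y := by
    rw [hK, ball_shift]
    refine setIntegral_congr_fun measurableSet_closedBall fun y hy => ?_
    beta_reduce
    rw [hUdef, scalDiv_shift]
    refine (scalDiv_congr T V _ ?_).symm
    filter_upwards [(isOpen_lt continuous_const continuous_norm).mem_nhds
      (hfar s₀ hs₀n.1 hs₀n.2 y (by simpa using hy))] with z hz
    exact hVT z (le_of_lt hz)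
  -- the derivative along ξ
  set Q : E3 → Fin 3 → Fin 3 → ℝ := fun x i j => fderiv ℝ (fun z => V z i j) x ξ with hQ
  have hQc : ∀ i j, Continuous (fun x => Q x i j) := fun i j =>
    ((hV i j).continuous_fderiv (by simp)).clm_apply continuous_const
  have hVc : ∀ i j, Continuous (fun x => V x i j) := fun i j => (hV i j).continuous
  have hQd : ∀ i j s y, HasDerivAt (fun s : ℝ => V (s • ξ + y) i j) (Q (s • ξ + y) i j) s := by
    intro i j s y
    have hf := ((hV i j).differentiable (by simp) (s • ξ + y)).hasFDerivAt
    have hc : HasDerivAt (fun s : ℝ => s • ξ + y) ξ s := by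
      simpa using ((hasDerivAt_id s).smul_const ξ).add_const y
    exact hf.comp_hasDerivAt s hc
  have hQP : ∀ i j y, ‖y‖ ≤ 1 → Q (s₀ • ξ + y) i j = s₀⁻¹ * PP U y i j := by
    intro i j y hy
    have h1 := euler T V ε hε hV hVT hhom _ (hfar s₀ hs₀n.1 hs₀n.2 y hy) i j
    rw [map_add, map_smul, fderiv_eq_sum _ _ y] at h1
    have h2 : ∀ k, pd (fun z => U z i j) k y = pd (fun z => V z i j) k (s₀ • ξ + y) := fun k =>
      congrFun (pd_shift (fun z => V z i j) (s₀ • ξ) k) y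
    simp only [PP, h2, hQ]
    simp only [hUdef, ← h1, smul_eq_mul]
    field_simp
    ring
  have hc1 : ∀ i j, Continuous (fun p : ℝ × E3 => V (p.1 • ξ + p.2) i j) := fun i j =>
    (hVc i j).comp (by fun_prop)
  have hc2 : ∀ i j, Continuous (fun p : ℝ × E3 => Q (p.1 • ξ + p.2) i j) := fun i j =>
    (hQc i j).comp (by fun_prop)
  have hd1 := deriv_int sphereMeasure (fun y : Metric.sphere (0 : E3) 1 => (y : E3))
    measurable_subtype_coe (Filter.Eventually.of_forall fun y => (norm_eq_of_mem_sphere y).le)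
    (fun p => ∑ j, V (p.1 • ξ + p.2) j j - ∑ i, ∑ j, V (p.1 • ξ + p.2) i j * p.2 i * p.2 j)
    (fun p => ∑ j, Q (p.1 • ξ + p.2) j j - ∑ i, ∑ j, Q (p.1 • ξ + p.2) i j * p.2 i * p.2 j)
    (by fun_prop) (by fun_prop)
    (fun s y => (HasDerivAt.fun_sum fun j _ => hQd j j s y).sub
      (HasDerivAt.fun_sum fun i _ => HasDerivAt.fun_sum fun j _ =>
        ((hQd i j s y).mul_const (y i : ℝ)).mul_const (y j : ℝ))) s₀
  haveI : IsFiniteMeasure (volume.restrict (Metric.closedBall (0 : E3) 1)) :=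
    isFiniteMeasure_restrict.2 measure_closedBall_lt_top.ne
  have hd2 := deriv_int (volume.restrict (Metric.closedBall (0 : E3) 1)) (fun y => y)
    measurable_id (by
      filter_upwards [ae_restrict_mem measurableSet_closedBall] with y hy
      simpa using hy)
    (fun p => ∑ j, V (p.1 • ξ + p.2) j j) (fun p => ∑ j, Q (p.1 • ξ + p.2) j j)
    (by fun_prop) (by fun_prop)
    (fun s y => (HasDerivAt.fun_sum fun j _ => hQd j j s y)) s₀
  have hd := (hd1.sub (hd2.const_mul 2)).congr_of_eventuallyEq
    (f₁ := G) (hnear.mono fun s hs => hGV s hs)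
  have e1 : ∫ y : Metric.sphere (0 : E3) 1, (∑ j, Q (s₀ • ξ + y) j j
      - ∑ i, ∑ j, Q (s₀ • ξ + y) i j * (y : E3) i * (y : E3) j) ∂sphereMeasure =
      s₀⁻¹ * ∫ y : Metric.sphere (0 : E3) 1, (∑ j, PP U y j j
      - ∑ i, ∑ j, PP U y i j * (y : E3) i * (y : E3) j) ∂sphereMeasure := by
    rw [← integral_const_mul]
    refine congrArg _ (funext fun y => ?_)
    simp only [hQP _ _ _ (norm_eq_of_mem_sphere y).le]
    simp only [mul_sub, Finset.mul_sum, mul_assoc]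
  have e2 : ∫ y in Metric.closedBall (0 : E3) 1, ∑ j, Q (s₀ • ξ + y) j j =
      s₀⁻¹ * ∫ y in Metric.closedBall (0 : E3) 1, ∑ j, PP U y j j := by
    rw [← integral_const_mul]
    refine setIntegral_congr_fun measurableSet_closedBall fun y hy => ?_
    simp only [hQP _ _ y (by simpa using hy), Finset.mul_sum]
  have hUc : ∀ i j, Continuous (fun x => U x i j) := fun i j => (hU i j).continuous
  have hPc : ∀ i j, Continuous (fun x => PP U x i j) := fun i j => by
    have : ∀ k, Continuous (pd (fun z => U z i j) k) := fun k => (pd_smooth (hU i j) k).continuous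
    have := hUc i j
    unfold PP
    fun_prop
  have hSc : Continuous (scalDiv U) := by
    have : ∀ i j k l, Continuous (pd (pd (fun z => U z i j) k) l) := fun i j k l =>
      (pd_smooth (pd_smooth (hU i j) k) l).continuous
    unfold scalDiv
    fun_prop
  have key := key_identity U hU
  rw [integral_sub (sphere_cont_int (f := fun y => ∑ j, PP U y j j
      - ∑ i, ∑ j, PP U y i j * y i * y j) (by fun_prop))
    (sphere_cont_int (f := fun y => ∑ j, U y j j
      - ∑ i, ∑ j, U y i j * y i * y j) (by fun_prop)),
    integral_add (ball_cont_int (by fun_prop)) (ball_cont_int hSc),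
    integral_sub (ball_cont_int (by fun_prop)) (ball_cont_int (by fun_prop)),
    integral_const_mul, integral_const_mul] at key
  have hfin : (G s₀ + K s₀) / s₀ = (∫ y : Metric.sphere (0 : E3) 1, (∑ j, Q (s₀ • ξ + y) j j
      - ∑ i, ∑ j, Q (s₀ • ξ + y) i j * (y : E3) i * (y : E3) j) ∂sphereMeasure)
      - 2 * ∫ y in Metric.closedBall (0 : E3) 1, ∑ j, Q (s₀ • ξ + y) j j := by
    rw [hGV s₀ hs₀n, hKV, e1, e2]
    field_simp
    linarith
  rw [hfin]
  exact hd
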